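/- arXiv:1107.1074 — 2 statements merged into one kernel-verified Lean document; each statement's English description precedes it below -/
import Mathlib

section
/- For every fixed x, y ∈ ℤ^d with x ≠ y, one has p(t; 0, 0) - p(t; x, y) ~ γ̃_d(y - x) · t^{-(d/2+1)} as t → ∞; that is, lim_{t→∞} t^{d/2+1} (p(t; 0, 0) - p(t; x, y)) = γ̃_d(y - x). -/
/-!
Substituting `θ = v / √t` in `p(t;0,0) - p(t;x,y) = (2π)^{-d} ∫ e^{φ(θ)t} (1 - cos⟨θ,y-x⟩) dθ`
produces the factor `t^{-d/2}`; a further factor `t^{-1}` comes from `1 - cos⟨θ,y-x⟩`, and the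
rescaled integrand converges to the integrand of `γ̃_d`. Dominated convergence applies because
`φ(θ) ≤ -c ‖θ‖²` on `[-π,π]^d`. This bound is where irreducibility enters: the `z` for which
`1 - cos⟨z,θ⟩ = O(φ(θ))` form a subgroup of `ℤ^d` containing `{z | 0 < a z}`, hence all of `ℤ^d`,
and the basis vectors give `(2/π²) θᵢ² ≤ 1 - cos θᵢ = O(φ(θ))`.
-/

open MeasureTheory Real Filter Topology Asymptotics

/-- Fourier symbol `φ(θ) = ∑_z a(z) cos⟨z,θ⟩` of the random walk on `ℤ^d`. -/
noncomputable def phiSymb (d : ℕ) (a : (Fin d → ℤ) → ℝ) (θ : Fin d → ℝ) : ℝ :=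
  ∑' z : Fin d → ℤ, a z * Real.cos (∑ i, (z i : ℝ) * θ i)

/-- Transition probability `p(t;x,y) = (2π)^{-d} ∫_{[-π,π]^d} e^{φ(θ)t} cos⟨θ,y-x⟩ dθ`. -/
noncomputable def ptrans (d : ℕ) (a : (Fin d → ℤ) → ℝ) (t : ℝ) (x y : Fin d → ℤ) : ℝ :=
  ((2 * π) ^ d)⁻¹ *
    ∫ θ in Set.Icc (fun _ : Fin d => -π) (fun _ : Fin d => π),
      Real.exp (phiSymb d a θ * t) * Real.cos (∑ i, θ i * ((y i : ℝ) - (x i : ℝ)))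

/-- Laplace transform `G_λ(x,y) = ∫_0^∞ e^{-λt} p(t;x,y) dt` (Green's function at `λ = 0`). -/
noncomputable def Glam (d : ℕ) (a : (Fin d → ℤ) → ℝ) (lam : ℝ) (x y : Fin d → ℤ) : ℝ :=
  ∫ t in Set.Ioi (0 : ℝ), Real.exp (-lam * t) * ptrans d a t x y

/-- Hessian matrix `φ''(0)`, with entries `-∑_z a(z) z_i z_j`. -/
noncomputable def hessPhi (d : ℕ) (a : (Fin d → ℤ) → ℝ) : Matrix (Fin d) (Fin d) ℝ :=
  Matrix.of fun i j => -∑' z : Fin d → ℤ, a z * (z i : ℝ) * (z j : ℝ)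

/-- `γ_d = (2π)^{-d/2} |det φ''(0)|^{-1/2}`. -/
noncomputable def gammaConst (d : ℕ) (a : (Fin d → ℤ) → ℝ) : ℝ :=
  ((2 * π) ^ ((d : ℝ) / 2))⁻¹ * (Real.sqrt |(hessPhi d a).det|)⁻¹

/-- `ρ_d(x) = (a/(2π)^d) ∫_{[-π,π]^d} (cos⟨x,θ⟩ - 1)/φ(θ) dθ` for `x ≠ 0`, and `ρ_d(0) = 1`. -/
noncomputable def rhoConst (d : ℕ) (a : (Fin d → ℤ) → ℝ) (x : Fin d → ℤ) : ℝ :=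
  if x = 0 then 1 else
    (-(a 0) / (2 * π) ^ d) *
      ∫ θ in Set.Icc (fun _ : Fin d => -π) (fun _ : Fin d => π),
        (Real.cos (∑ i, (x i : ℝ) * θ i) - 1) / phiSymb d a θ

/-- `γ̃_d(z) = (1/(2(2π)^d)) ∫_{ℝ^d} ⟨v,z⟩² e^{⟨φ''(0)v,v⟩/2} dv`. -/
noncomputable def gammaTilde (d : ℕ) (a : (Fin d → ℤ) → ℝ) (z : Fin d → ℤ) : ℝ :=
  (2 * (2 * π) ^ d)⁻¹ *
    ∫ v : Fin d → ℝ, (∑ i, v i * (z i : ℝ)) ^ 2 *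
      Real.exp ((∑ i, (hessPhi d a).mulVec v i * v i) / 2)

open Matrix

section Laplace

open Module

variable {E F : Type*} [NormedAddCommGroup E] [NormedSpace ℝ E] [NormedAddCommGroup F]
  [NormedSpace ℝ F]

lemma norm_pow_smul_indicator_exp_smul_le {K : Set E} {φ : E → ℝ} {g : E → F} {c C : ℝ} {m k : ℕ}
    (hC : 0 ≤ C) (hφ : ∀ θ ∈ K, φ θ ≤ -c * ‖θ‖ ^ m) (hg : ∀ θ ∈ K, ‖g θ‖ ≤ C * ‖θ‖ ^ k)
    {r : ℝ} (hr : 0 < r) (v : E) :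
    ‖r ^ k • K.indicator (fun θ => exp (r ^ m * φ θ) • g θ) (r⁻¹ • v)‖ ≤
      C * (‖v‖ ^ k * exp (-c * ‖v‖ ^ m)) := by
  by_cases hv : r⁻¹ • v ∈ K
  · have hscale (n : ℕ) : r ^ n * ‖r⁻¹ • v‖ ^ n = ‖v‖ ^ n := by
      rw [← mul_pow, norm_smul, norm_inv, norm_of_nonneg hr.le, mul_inv_cancel_left₀ hr.ne']
    have hexponent : r ^ m * φ (r⁻¹ • v) ≤ -c * ‖v‖ ^ m := by
      rw [← hscale m, mul_left_comm]
      gcongr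
      exact hφ _ hv
    have hamplitude : r ^ k * ‖g (r⁻¹ • v)‖ ≤ C * ‖v‖ ^ k := by
      rw [← hscale k, mul_left_comm]
      gcongr
      exact hg _ hv
    rw [Set.indicator_of_mem hv, norm_smul, norm_smul, norm_of_nonneg (exp_nonneg _),
      norm_of_nonneg (pow_nonneg hr.le k), mul_left_comm, mul_comm, ← mul_assoc]
    gcongr
  · rw [Set.indicator_of_notMem hv, smul_zero, norm_zero]
    positivity

variable [MeasurableSpace E] [BorelSpace E] [FiniteDimensional ℝ E] (μ : Measure E)
  [μ.IsAddHaarMeasure]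

lemma integrable_norm_pow_mul_exp_neg_mul_norm_pow {c : ℝ} (hc : 0 < c) {m : ℕ} (hm : m ≠ 0)
    (k : ℕ) : Integrable (fun v : E => ‖v‖ ^ k * exp (-c * ‖v‖ ^ m)) μ := by
  rcases subsingleton_or_nontrivial E with hE | hE
  · exact Continuous.integrable_of_hasCompactSupport (by fun_prop)
      (HasCompactSupport.of_compactSpace _)
  · refine (integrable_fun_norm_addHaar μ (f := fun y => y ^ k * exp (-c * y ^ m))).2 ?_
    have hint := integrableOn_rpow_mul_exp_neg_mul_rpow (p := m) (s := (finrank ℝ E - 1 + k : ℕ))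
      (neg_one_lt_zero.trans_le (Nat.cast_nonneg _)) (by positivity) hc
    simpa only [rpow_natCast, smul_eq_mul, pow_add, mul_assoc] using hint

lemma integral_indicator_comp_inv_smul {K : Set E} (hK : MeasurableSet K) (f : E → F) {r : ℝ}
    (hr : 0 ≤ r) : ∫ v, K.indicator f (r⁻¹ • v) ∂μ = r ^ finrank ℝ E • ∫ θ in K, f θ ∂μ := by
  rw [Measure.integral_comp_inv_smul_of_nonneg μ _ hr, integral_indicator hK]

/-- Laplace's method at an interior point where `φ` vanishes to order `m` and `g` to order `k`, by
dominated convergence after the substitution `θ = r⁻¹ • v`. -/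
theorem tendsto_pow_smul_setIntegral_exp_smul {K : Set E} (hKm : MeasurableSet K) (hK : K ∈ 𝓝 0)
    {φ q : E → ℝ} {g h : E → F} {c : ℝ} {m k : ℕ} (hc : 0 < c) (hm : m ≠ 0)
    (hφm : Measurable φ) (hgm : StronglyMeasurable g)
    (hφ : ∀ θ ∈ K, φ θ ≤ -c * ‖θ‖ ^ m) (hg : g =O[𝓟 K] fun θ => ‖θ‖ ^ k)
    (hφq : ∀ v, Tendsto (fun r : ℝ => r ^ m * φ (r⁻¹ • v)) atTop (𝓝 (q v)))
    (hgh : ∀ v, Tendsto (fun r : ℝ => r ^ k • g (r⁻¹ • v)) atTop (𝓝 (h v))) :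
    Tendsto (fun r : ℝ => r ^ (finrank ℝ E + k) • ∫ θ in K, exp (r ^ m * φ θ) • g θ ∂μ) atTop
      (𝓝 (∫ v, exp (q v) • h v ∂μ)) := by
  obtain ⟨C, hC, hgWith⟩ := hg.exists_nonneg
  have hg_le : ∀ θ ∈ K, ‖g θ‖ ≤ C * ‖θ‖ ^ k := fun θ hθ => by
    simpa using isBigOWith_principal.1 hgWith θ hθ
  let f (r : ℝ) (v : E) : F := r ^ k • K.indicator (fun θ => exp (r ^ m * φ θ) • g θ) (r⁻¹ • v)
  have hrescale : ∀ᶠ r : ℝ in atTop,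
      ∫ v, f r v ∂μ = r ^ (finrank ℝ E + k) • ∫ θ in K, exp (r ^ m * φ θ) • g θ ∂μ := by
    filter_upwards [eventually_ge_atTop 0] with r hr
    rw [integral_smul, integral_indicator_comp_inv_smul μ hKm _ hr, smul_smul, pow_add, mul_comm]
  refine (tendsto_integral_filter_of_dominated_convergence
    (fun v => C * (‖v‖ ^ k * exp (-c * ‖v‖ ^ m))) (.of_forall fun r => ?_) ?_
    ((integrable_norm_pow_mul_exp_neg_mul_norm_pow μ hc hm k).const_mul C)
    (.of_forall fun v => ?_)).congr' hrescale
  · have hmeas : StronglyMeasurable fun θ => exp (r ^ m * φ θ) • g θ :=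
      (hφm.const_mul _).exp.stronglyMeasurable.smul hgm
    exact (((hmeas.indicator hKm).comp_measurable (measurable_const_smul r⁻¹)).const_smul
      (r ^ k)).aestronglyMeasurable
  · filter_upwards [eventually_gt_atTop 0] with r hr
    exact .of_forall (norm_pow_smul_indicator_exp_smul_le hC hφ hg_le hr)
  · have hzero : Tendsto (fun r : ℝ => r⁻¹ • v) atTop (𝓝 0) := by
      simpa using (tendsto_inv_atTop_zero (𝕜 := ℝ)).smul_const v
    refine (((continuous_exp.tendsto _).comp (hφq v)).smul (hgh v)).congr' ?_
    filter_upwards [hzero.eventually_mem hK] with r hr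
    simp only [f, Set.indicator_of_mem hr, Function.comp_apply]
    rw [smul_comm]

end Laplace

section Cosine

lemma one_sub_cos_add_le (x y : ℝ) :
    1 - cos (x + y) ≤ 2 * (1 - cos x) + 2 * (1 - cos y) := by
  -- The parallelogram law for `1 - e^{ix}` and `e^{ix} - e^{i(x+y)}`.
  have hparallelogram : 2 * (1 - cos (x + y)) + ((cos x + cos y - 2) ^ 2 + (sin x - sin y) ^ 2) =
      2 * (2 * (1 - cos x) + 2 * (1 - cos y)) := by
    rw [cos_add]
    linear_combination sin_sq_add_cos_sq x + sin_sq_add_cos_sq y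
  linarith [sq_nonneg (cos x + cos y - 2), sq_nonneg (sin x - sin y)]

lemma one_sub_cos_eq_sinc_sq (x : ℝ) : 1 - cos x = x ^ 2 / 2 * sinc (x / 2) ^ 2 := by
  rcases eq_or_ne x 0 with rfl | hx
  · simp
  · have hcos : cos x = 1 - 2 * sin (x / 2) ^ 2 := by
      rw [← cos_two_mul_eq_one_sub, mul_div_cancel₀ x two_ne_zero]
    rw [hcos, sinc_of_ne_zero (div_ne_zero hx two_ne_zero)]
    field_simp
    ring

lemma one_sub_cos_isBigO_sq (l : Filter ℝ) : (fun x => 1 - cos x) =O[l] fun x => x ^ 2 := by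
  refine .of_bound (1 / 2) (.of_forall fun x => ?_)
  rw [norm_of_nonneg (sub_nonneg.2 (cos_le_one x)), norm_of_nonneg (sq_nonneg x)]
  linarith [one_sub_sq_div_two_le_cos (x := x)]

lemma sq_isBigO_one_sub_cos :
    (fun x : ℝ => x ^ 2) =O[𝓟 (Set.Icc (-π) π)] fun x => 1 - cos x := by
  refine .of_bound (π ^ 2 / 2) (eventually_principal.2 fun x hx => ?_)
  rw [norm_of_nonneg (sub_nonneg.2 (cos_le_one x)), norm_of_nonneg (sq_nonneg x),
    ← div_le_iff₀' (by positivity)]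
  linear_combination cos_le_one_sub_mul_cos_sq (abs_le.2 hx)

lemma one_sub_cos_clm_isBigO_norm_sq {E : Type*} [SeminormedAddCommGroup E] [NormedSpace ℝ E]
    (L : E →L[ℝ] ℝ) (l : Filter E) : (fun θ => 1 - cos (L θ)) =O[l] fun θ => ‖θ‖ ^ 2 :=
  ((one_sub_cos_isBigO_sq ⊤).comp_tendsto tendsto_top).trans ((L.isBigO_id l).norm_right.pow 2)

lemma isBigO_one_sub_cos_of_mem_closure {G Θ : Type*} [AddGroup G] {S : Set G} {l : Filter Θ}
    {ψ : Θ → ℝ} (χ : G →+ (Θ → ℝ)) (hS : ∀ g ∈ S, (fun θ => 1 - cos (χ g θ)) =O[l] ψ) {g : G}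
    (hg : g ∈ AddSubgroup.closure S) : (fun θ => 1 - cos (χ g θ)) =O[l] ψ := by
  induction hg using AddSubgroup.closure_induction with
  | mem g hg => exact hS g hg
  | zero => simpa using isBigO_zero ψ l
  | add g g' _ _ hg hg' =>
    refine (IsBigO.of_norm_le fun θ => ?_).trans
      ((hg.const_mul_left 2).add (hg'.const_mul_left 2))
    rw [norm_of_nonneg (sub_nonneg.2 (cos_le_one _)), map_add, Pi.add_apply]
    exact one_sub_cos_add_le _ _
  | neg g _ hg => simpa using hg

lemma tendsto_sq_mul_one_sub_cos_inv_mul (s : ℝ) :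
    Tendsto (fun r : ℝ => r ^ 2 * (1 - cos (r⁻¹ * s))) atTop (𝓝 (s ^ 2 / 2)) := by
  have hsinc : Tendsto (fun r : ℝ => sinc (r⁻¹ * s / 2)) atTop (𝓝 1) := by
    have hzero : Tendsto (fun r : ℝ => r⁻¹ * s / 2) atTop (𝓝 0) := by
      simpa using (tendsto_inv_atTop_zero.mul_const s).div_const 2
    simpa [Function.comp_def] using (continuous_sinc.tendsto 0).comp hzero
  have hlim := (hsinc.pow 2).const_mul (s ^ 2 / 2)
  rw [one_pow, mul_one] at hlim
  refine hlim.congr' ?_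
  filter_upwards [eventually_ne_atTop 0] with r hr
  rw [one_sub_cos_eq_sinc_sq]
  field_simp

lemma sq_mul_one_sub_cos_inv_mul_le (r s : ℝ) : r ^ 2 * (1 - cos (r⁻¹ * s)) ≤ s ^ 2 / 2 := by
  rcases eq_or_ne r 0 with rfl | hr
  · simp [sq_nonneg s, div_nonneg]
  · calc r ^ 2 * (1 - cos (r⁻¹ * s)) ≤ r ^ 2 * ((r⁻¹ * s) ^ 2 / 2) := by
          gcongr
          linarith [one_sub_sq_div_two_le_cos (x := r⁻¹ * s)]
      _ = s ^ 2 / 2 := by field_simp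

lemma tendsto_sq_mul_tsum_mul_one_sub_cos {ι : Type*} {a s : ι → ℝ}
    (has : Summable fun i => a i * s i ^ 2) :
    Tendsto (fun r : ℝ => r ^ 2 * ∑' i, a i * (1 - cos (r⁻¹ * s i))) atTop
      (𝓝 ((∑' i, a i * s i ^ 2) / 2)) := by
  have hbound (r : ℝ) (i : ι) :
      ‖a i * (r ^ 2 * (1 - cos (r⁻¹ * s i)))‖ ≤ ‖a i * s i ^ 2‖ / 2 := by
    rw [norm_mul (a i), norm_mul (a i), mul_div_assoc, norm_of_nonneg (sq_nonneg (s i)),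
      norm_of_nonneg (mul_nonneg (sq_nonneg r) (sub_nonneg.2 (cos_le_one _)))]
    gcongr
    exact sq_mul_one_sub_cos_inv_mul_le r (s i)
  have hlim := tendsto_tsum_of_dominated_convergence (has.norm.div_const 2)
    (fun i => (tendsto_sq_mul_one_sub_cos_inv_mul (s i)).const_mul (a i))
    (.of_forall hbound)
  simpa only [mul_left_comm (a _), tsum_mul_left, ← mul_div_assoc, tsum_div_const] using hlim

end Cosine

section Symbol

variable {d : ℕ} {a : (Fin d → ℤ) → ℝ}

/-- The pairing `⟨z, θ⟩ = ∑ i, z i * θ i` of a lattice point `z` with a frequency `θ`, bundled as an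
additive map in `z` and a continuous linear map in `θ`. -/
noncomputable def latticePairing (d : ℕ) : (Fin d → ℤ) →+ ((Fin d → ℝ) →L[ℝ] ℝ) where
  toFun z := ∑ i, (z i : ℝ) • ContinuousLinearMap.proj i
  map_zero' := by simp
  map_add' z w := by simp [add_smul, Finset.sum_add_distrib]

lemma latticePairing_apply (z : Fin d → ℤ) (θ : Fin d → ℝ) :
    latticePairing d z θ = ∑ i, (z i : ℝ) * θ i := by
  simp [latticePairing]

lemma latticePairing_single_one (i : Fin d) (θ : Fin d → ℝ) :
    latticePairing d (Pi.single i 1) θ = θ i := by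
  simp [latticePairing_apply, Pi.single_apply]

/-- The cube `[-π, π]^d` of frequencies, over which `ptrans` integrates. -/
abbrev frequencyCube (d : ℕ) : Set (Fin d → ℝ) :=
  Set.Icc (fun _ => -π) fun _ => π

lemma frequencyCube_mem_nhds_zero (d : ℕ) : frequencyCube d ∈ 𝓝 0 :=
  pi_Icc_mem_nhds (fun _ => neg_lt_zero.2 pi_pos) fun _ => pi_pos

lemma phiSymb_eq_tsum (a : (Fin d → ℤ) → ℝ) (θ : Fin d → ℝ) :
    phiSymb d a θ = ∑' z, a z * cos (latticePairing d z θ) := by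
  simp only [phiSymb, latticePairing_apply]

lemma norm_mul_cos_le (b x : ℝ) : ‖b * cos x‖ ≤ ‖b‖ := by
  rw [norm_mul]
  exact mul_le_of_le_one_right (norm_nonneg b) (abs_cos_le_one x)

lemma continuous_phiSymb (ha : Summable a) : Continuous (phiSymb d a) :=
  continuous_tsum (fun z => by fun_prop) ha.norm fun z _ => norm_mul_cos_le (a z) _

lemma hasSum_mul_one_sub_cos (hsum : HasSum a 0) (θ : Fin d → ℝ) :
    HasSum (fun z => a z * (1 - cos (latticePairing d z θ))) (-phiSymb d a θ) := by
  have hcos : Summable fun z => a z * cos (latticePairing d z θ) :=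
    hsum.summable.norm.of_norm_bounded fun z => norm_mul_cos_le (a z) _
  rw [phiSymb_eq_tsum, ← zero_sub]
  exact (hsum.sub hcos.hasSum).congr_fun fun z => mul_one_sub _ _

lemma mul_one_sub_cos_latticePairing_nonneg (hpos : ∀ z, z ≠ 0 → 0 ≤ a z) (z : Fin d → ℤ)
    (θ : Fin d → ℝ) : 0 ≤ a z * (1 - cos (latticePairing d z θ)) := by
  rcases eq_or_ne z 0 with rfl | hz
  · simp
  · exact mul_nonneg (hpos z hz) (sub_nonneg.2 (cos_le_one _))

lemma phiSymb_nonpos (hpos : ∀ z, z ≠ 0 → 0 ≤ a z) (hsum : HasSum a 0) (θ : Fin d → ℝ) :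
    phiSymb d a θ ≤ 0 :=
  neg_nonneg.1 <| (hasSum_mul_one_sub_cos hsum θ).nonneg fun z =>
    mul_one_sub_cos_latticePairing_nonneg hpos z θ

lemma one_sub_cos_isBigO_phiSymb_of_pos (hpos : ∀ z, z ≠ 0 → 0 ≤ a z) (hsum : HasSum a 0)
    (l : Filter (Fin d → ℝ)) {z : Fin d → ℤ} (hz : 0 < a z) :
    (fun θ => 1 - cos (latticePairing d z θ)) =O[l] phiSymb d a := by
  refine .of_bound (a z)⁻¹ (.of_forall fun θ => ?_)
  rw [norm_of_nonneg (sub_nonneg.2 (cos_le_one _)), norm_of_nonpos (phiSymb_nonpos hpos hsum θ),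
    le_inv_mul_iff₀ hz]
  exact le_hasSum (hasSum_mul_one_sub_cos hsum θ) z fun w _ =>
    mul_one_sub_cos_latticePairing_nonneg hpos w θ

lemma one_sub_cos_isBigO_phiSymb (hpos : ∀ z, z ≠ 0 → 0 ≤ a z) (hsum : HasSum a 0)
    (hirr : AddSubgroup.closure {z | 0 < a z} = ⊤) (l : Filter (Fin d → ℝ)) (z : Fin d → ℤ) :
    (fun θ => 1 - cos (latticePairing d z θ)) =O[l] phiSymb d a :=
  isBigO_one_sub_cos_of_mem_closure
    (.mk' (fun z θ => latticePairing d z θ) fun z w => by ext; simp)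
    (fun _ hw => one_sub_cos_isBigO_phiSymb_of_pos hpos hsum l hw) (hirr ▸ AddSubgroup.mem_top z)

lemma norm_sq_isBigO_phiSymb (hpos : ∀ z, z ≠ 0 → 0 ≤ a z) (hsum : HasSum a 0)
    (hirr : AddSubgroup.closure {z | 0 < a z} = ⊤) :
    (fun θ : Fin d → ℝ => ‖θ‖ ^ 2) =O[𝓟 (frequencyCube d)] phiSymb d a := by
  have hcoord (i : Fin d) : (fun θ => θ i ^ 2) =O[𝓟 (frequencyCube d)] phiSymb d a := by
    have hmaps : Tendsto (fun θ : Fin d → ℝ => θ i) (𝓟 (frequencyCube d))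
        (𝓟 (Set.Icc (-π) π)) :=
      tendsto_principal_principal.2 fun θ hθ => ⟨hθ.1 i, hθ.2 i⟩
    refine (sq_isBigO_one_sub_cos.comp_tendsto hmaps).trans ?_
    simpa only [latticePairing_single_one, Function.comp_def] using
      one_sub_cos_isBigO_phiSymb hpos hsum hirr (𝓟 (frequencyCube d)) (Pi.single i 1)
  have hsqrt (θ : Fin d → ℝ) : √|phiSymb d a θ| ^ 2 = ‖phiSymb d a θ‖ := sq_sqrt (abs_nonneg _)
  have hid : (fun θ : Fin d → ℝ => θ) =O[𝓟 (frequencyCube d)] fun θ => √|phiSymb d a θ| :=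
    isBigO_pi.2 fun i => .of_pow two_ne_zero <| by
      simpa only [Pi.pow_def, hsqrt, isBigO_norm_right] using hcoord i
  simpa only [hsqrt, isBigO_norm_right] using hid.norm_left.pow 2

lemma exists_phiSymb_le_neg_mul_norm_sq (hpos : ∀ z, z ≠ 0 → 0 ≤ a z) (hsum : HasSum a 0)
    (hirr : AddSubgroup.closure {z | 0 < a z} = ⊤) :
    ∃ c > 0, ∀ θ ∈ frequencyCube d, phiSymb d a θ ≤ -c * ‖θ‖ ^ 2 := by
  obtain ⟨C, hC, hbound⟩ := (norm_sq_isBigO_phiSymb hpos hsum hirr).exists_pos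
  refine ⟨C⁻¹, inv_pos.2 hC, fun θ hθ => ?_⟩
  have hle := isBigOWith_principal.1 hbound θ hθ
  rw [norm_pow, norm_norm, norm_of_nonpos (phiSymb_nonpos hpos hsum θ), ← inv_mul_le_iff₀ hC] at hle
  linarith

lemma abs_mul_le_sum_sq {ι : Type*} [Fintype ι] (x : ι → ℝ) (i j : ι) :
    |x i * x j| ≤ ∑ k, x k ^ 2 := by
  have hle (k : ι) : x k ^ 2 ≤ ∑ k, x k ^ 2 :=
    Finset.single_le_sum (fun _ _ => sq_nonneg _) (Finset.mem_univ k)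
  rw [abs_le]
  constructor <;> linarith [hle i, hle j, sq_nonneg (x i + x j), sq_nonneg (x i - x j)]

lemma summable_mul_coord_mul_coord (hvar : Summable fun z => (∑ i, (z i : ℝ) ^ 2) * a z)
    (i j : Fin d) : Summable fun z => a z * (z i : ℝ) * (z j : ℝ) := by
  refine hvar.norm.of_norm_bounded fun z => ?_
  rw [mul_assoc, mul_comm, norm_mul, norm_mul (∑ _, _)]
  exact mul_le_mul_of_nonneg_right
    ((abs_mul_le_sum_sq (fun k => (z k : ℝ)) i j).trans (le_abs_self _)) (norm_nonneg (a z))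

lemma hasSum_mul_latticePairing_sq (hvar : Summable fun z => (∑ i, (z i : ℝ) ^ 2) * a z)
    (v : Fin d → ℝ) :
    HasSum (fun z => a z * latticePairing d z v ^ 2) (-(hessPhi d a *ᵥ v ⬝ᵥ v)) := by
  have hexpand : HasSum (fun z => ∑ i, ∑ j, a z * (z i : ℝ) * (z j : ℝ) * (v j * v i))
      (∑ i, ∑ j, (∑' z, a z * (z i : ℝ) * (z j : ℝ)) * (v j * v i)) :=
    hasSum_sum fun i _ => hasSum_sum fun j _ =>
      (summable_mul_coord_mul_coord hvar i j).hasSum.mul_right _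
  convert hexpand using 1
  · ext z
    rw [latticePairing_apply, sq, Finset.sum_mul_sum]
    simp only [Finset.mul_sum]
    exact Finset.sum_congr rfl fun i _ => Finset.sum_congr rfl fun j _ => by ring
  · simp only [hessPhi, mulVec, dotProduct, of_apply, Finset.sum_mul, neg_mul,
      Finset.sum_neg_distrib, neg_neg, mul_assoc]

lemma tendsto_sq_mul_phiSymb_inv_smul (hsum : HasSum a 0)
    (hvar : Summable fun z => (∑ i, (z i : ℝ) ^ 2) * a z) (v : Fin d → ℝ) :
    Tendsto (fun r : ℝ => r ^ 2 * phiSymb d a (r⁻¹ • v)) atTop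
      (𝓝 ((hessPhi d a *ᵥ v ⬝ᵥ v) / 2)) := by
  have hquad := hasSum_mul_latticePairing_sq hvar v
  have hlim := (tendsto_sq_mul_tsum_mul_one_sub_cos hquad.summable).neg
  rw [hquad.tsum_eq, neg_div, neg_neg] at hlim
  refine hlim.congr fun r => ?_
  have hsymb := (hasSum_mul_one_sub_cos hsum (r⁻¹ • v)).tsum_eq
  simp only [map_smul, smul_eq_mul] at hsymb
  rw [hsymb, mul_neg, neg_neg]

lemma ptrans_sub_ptrans (ha : Summable a) (t : ℝ) (x y : Fin d → ℤ) :
    ptrans d a t 0 0 - ptrans d a t x y = ((2 * π) ^ d)⁻¹ *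
      ∫ θ in frequencyCube d, exp (t * phiSymb d a θ) * (1 - cos (latticePairing d (y - x) θ)) := by
  have hφ := continuous_phiSymb ha
  rw [ptrans, ptrans, ← mul_sub, ← integral_sub]
  · simp [mul_sub, latticePairing_apply, mul_comm]
  all_goals exact Continuous.integrableOn_Icc (by fun_prop)

lemma gammaTilde_eq_integral_exp_mul (z : Fin d → ℤ) :
    gammaTilde d a z = ((2 * π) ^ d)⁻¹ *
      ∫ v, exp ((hessPhi d a *ᵥ v ⬝ᵥ v) / 2) * (latticePairing d z v ^ 2 / 2) := by
  rw [gammaTilde, mul_inv, mul_comm 2⁻¹, mul_assoc, ← integral_const_mul]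
  congr 2 with v
  simp only [latticePairing_apply, dotProduct, mul_comm]
  ring

lemma tendsto_pow_mul_setIntegral_exp_phiSymb (hpos : ∀ z, z ≠ 0 → 0 ≤ a z) (hsum : HasSum a 0)
    (hvar : Summable fun z => (∑ i, (z i : ℝ) ^ 2) * a z)
    (hirr : AddSubgroup.closure {z | 0 < a z} = ⊤) (z : Fin d → ℤ) :
    Tendsto (fun r : ℝ => r ^ (d + 2) * ∫ θ in frequencyCube d,
        exp (r ^ 2 * phiSymb d a θ) * (1 - cos (latticePairing d z θ))) atTop
      (𝓝 (∫ v, exp ((hessPhi d a *ᵥ v ⬝ᵥ v) / 2) * (latticePairing d z v ^ 2 / 2))) := by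
  obtain ⟨c, hc, hφ⟩ := exists_phiSymb_le_neg_mul_norm_sq hpos hsum hirr
  have hamplitude (v : Fin d → ℝ) :
      Tendsto (fun r : ℝ => r ^ 2 • (1 - cos (latticePairing d z (r⁻¹ • v)))) atTop
        (𝓝 (latticePairing d z v ^ 2 / 2)) := by
    simpa only [map_smul, smul_eq_mul] using
      tendsto_sq_mul_one_sub_cos_inv_mul (latticePairing d z v)
  simpa only [Module.finrank_fin_fun, smul_eq_mul] using
    tendsto_pow_smul_setIntegral_exp_smul volume measurableSet_Icc (frequencyCube_mem_nhds_zero d)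
      hc two_ne_zero (continuous_phiSymb hsum.summable).measurable
      (Continuous.stronglyMeasurable (by fun_prop)) hφ
      (one_sub_cos_clm_isBigO_norm_sq (latticePairing d z) _)
      (tendsto_sq_mul_phiSymb_inv_smul hsum hvar) hamplitude

end Symbol

lemma rpow_div_two_add_one_eq_sqrt_pow {t : ℝ} (ht : 0 ≤ t) (n : ℕ) :
    t ^ ((n : ℝ) / 2 + 1) = √t ^ (n + 2) := by
  rw [sqrt_eq_rpow, ← rpow_natCast, ← rpow_mul ht]
  push_cast
  ring_nf

theorem ptrans_diff_asymptotic_general {d : ℕ} {a : (Fin d → ℤ) → ℝ}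
    (hpos : ∀ z : Fin d → ℤ, z ≠ 0 → 0 ≤ a z) (hsum : HasSum a 0)
    (hvar : Summable fun z : Fin d → ℤ => (∑ i, (z i : ℝ) ^ 2) * a z)
    (hirr : AddSubgroup.closure {z : Fin d → ℤ | 0 < a z} = ⊤) (x y : Fin d → ℤ) :
    Tendsto (fun t : ℝ => t ^ ((d : ℝ) / 2 + 1) * (ptrans d a t 0 0 - ptrans d a t x y)) atTop
      (𝓝 (gammaTilde d a (y - x))) := by
  rw [gammaTilde_eq_integral_exp_mul]
  refine (((tendsto_pow_mul_setIntegral_exp_phiSymb hpos hsum hvar hirr (y - x)).comp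
    tendsto_sqrt_atTop).const_mul ((2 * π) ^ d)⁻¹).congr' ?_
  filter_upwards [eventually_ge_atTop 0] with t ht
  rw [rpow_div_two_add_one_eq_sqrt_pow ht, ptrans_sub_ptrans hsum.summable, Function.comp_apply,
    sq_sqrt ht, mul_left_comm]

/-- `p(t;0,0) - p(t;x,y) ~ γ̃_d(y-x) t^{-(d/2+1)}` as `t → ∞`, for `x ≠ y`. -/
theorem ptrans_diff_asymptotic
    (d : ℕ) (hd : 1 ≤ d) (a : (Fin d → ℤ) → ℝ)
    (hpos : ∀ z : Fin d → ℤ, z ≠ 0 → 0 ≤ a z)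
    (hneg : a 0 < 0)
    (hsymm : ∀ z : Fin d → ℤ, a (-z) = a z)
    (hsum : HasSum a 0)
    (hvar : Summable fun z : Fin d → ℤ => (∑ i, ((z i : ℝ)) ^ 2) * a z)
    (hirr : AddSubgroup.closure {z : Fin d → ℤ | 0 < a z} = ⊤)
    (x y : Fin d → ℤ) (hxy : x ≠ y) :
    Tendsto (fun t : ℝ => t ^ ((d : ℝ) / 2 + 1) * (ptrans d a t 0 0 - ptrans d a t x y)) atTop
      (𝓝 (gammaTilde d a (y - x))) :=
  ptrans_diff_asymptotic_general hpos hsum hvar hirr x y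
end

section
/- If d = 1, then for each r ∈ ℤ, r ≠ 0, one has the expansion G_λ(0, 0) - G_λ(0, r) = ρ_1(r)/a - 2√π γ̃_1(r) √λ + o(√λ) as λ → 0+. -/
open MeasureTheory Real Filter Topology Asymptotics

/-- Fourier symbol `φ(θ) = ∑_z a(z) cos(zθ)` of the random walk on `ℤ`. -/
noncomputable def phi1 (a : ℤ → ℝ) (θ : ℝ) : ℝ :=
  ∑' z : ℤ, a z * Real.cos ((z : ℝ) * θ)

/-- Transition probability `p(t;x,y) = (2π)⁻¹ ∫_{-π}^{π} e^{φ(θ)t} cos(θ(y-x)) dθ`. -/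
noncomputable def p1 (a : ℤ → ℝ) (t : ℝ) (x y : ℤ) : ℝ :=
  (2 * π)⁻¹ * ∫ θ in (-π)..π, Real.exp (phi1 a θ * t) * Real.cos (θ * ((y : ℝ) - (x : ℝ)))

/-- Laplace transform `G_λ(x,y) = ∫_0^∞ e^{-λt} p(t;x,y) dt`. -/
noncomputable def G1 (a : ℤ → ℝ) (lam : ℝ) (x y : ℤ) : ℝ :=
  ∫ t in Set.Ioi (0 : ℝ), Real.exp (-lam * t) * p1 a t x y

/-- `φ''(0) = -∑_z a(z) z²`. -/
noncomputable def phi1'' (a : ℤ → ℝ) : ℝ := -∑' z : ℤ, a z * (z : ℝ) ^ 2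

/-- `γ₁ = 1/√(2π |φ''(0)|)`. -/
noncomputable def gam1 (a : ℤ → ℝ) : ℝ := 1 / Real.sqrt (2 * π * |phi1'' a|)

/-- `ρ₁(r) = (a/(2π)) ∫_{-π}^{π} (cos(rθ) - 1)/φ(θ) dθ` for `r ≠ 0`, and `ρ₁(0) = 1`. -/
noncomputable def rho1 (a : ℤ → ℝ) (r : ℤ) : ℝ :=
  if r = 0 then 1 else
    (-(a 0) / (2 * π)) * ∫ θ in (-π)..π, (Real.cos ((r : ℝ) * θ) - 1) / phi1 a θ

/-- `γ̃₁(r) = (r²/(4π)) ∫_ℝ v² e^{φ''(0)v²/2} dv`. -/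
noncomputable def gamTilde1 (a : ℤ → ℝ) (r : ℤ) : ℝ :=
  ((r : ℝ) ^ 2 / (4 * π)) * ∫ v : ℝ, v ^ 2 * Real.exp (phi1'' a * v ^ 2 / 2)

/-- The constant `C₁(x,y)` from Theorem 1 of the paper (with `a = -a(0)`). -/
noncomputable def C1Const (a : ℤ → ℝ) (x y : ℤ) : ℝ :=
  (rho1 a (y - x) + rho1 a x - rho1 a y) / (4 * (-(a 0)) * π * gam1 a) +
    (-(a 0)) * π * (y : ℝ) ^ 2 * gam1 a ^ 3 *
      (rho1 a (y - x) - rho1 a x - rho1 a y) / (rho1 a y) ^ 2 +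
    2 * (-(a 0)) * π * (x : ℝ) * (y : ℝ) * gam1 a ^ 3 / rho1 a y

/-! The difference `G_λ(0,0) - G_λ(0,r)` is the Fourier integral of `(1 - cos rθ) / (λ - φ(θ))`.
Write `1 - cos rθ = θ² A(θ)` and `φ(θ) = -θ² q(θ)` with `A`, `q` continuous; irreducibility
makes `q` positive on `[-π, π]`. The integrand is `A / q` at `λ = 0`, which gives `ρ₁(r) / a`,
and for `λ > 0` it falls short of that by `(A / q) · λ / (λ + θ² q)`. This last kernel concentrates
at the origin at scale `√λ` with mass `√λ π / √q(0)`, and `q(0) = -φ''(0) / 2` identifies the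
resulting coefficient with a Gaussian second moment. -/

theorem isLittleO_sub_const_mul_of_tendsto_div {α 𝕜 : Type*} [NormedField 𝕜] {l : Filter α}
    {f g : α → 𝕜} {c : 𝕜} (hg : ∀ᶠ x in l, g x ≠ 0)
    (h : Tendsto (fun x => f x / g x) l (𝓝 c)) :
    (fun x => f x - c * g x) =o[l] g := by
  have hsub : Tendsto (fun x => f x / g x - c) l (𝓝 0) := by
    simpa only [sub_self] using h.sub_const c
  rw [isLittleO_iff_tendsto' (hg.mono fun x hx h0 => absurd h0 hx)]
  refine hsub.congr' (hg.mono fun x hx => ?_)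
  simp only [sub_div, mul_div_cancel_right₀ c hx]

theorem mul_sinc (x : ℝ) : x * sinc x = sin x := by
  rcases eq_or_ne x 0 with rfl | hx
  · simp
  · rw [sinc_of_ne_zero hx, mul_div_cancel₀ _ hx]

theorem integral_sq_mul_exp_neg_mul_sq {b : ℝ} (hb : 0 < b) :
    ∫ x : ℝ, x ^ 2 * exp (-b * x ^ 2) = √(π / b) / (2 * b) := by
  let v : NNReal := ⟨(2 * b)⁻¹, by positivity⟩
  have hv : (v : ℝ) = (2 * b)⁻¹ := rfl
  have hv0 : v ≠ 0 := by
    rw [← NNReal.coe_ne_zero, hv]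
    positivity
  have hvar : ∫ x, x ^ 2 ∂ProbabilityTheory.gaussianReal 0 v = v := by
    rw [← ProbabilityTheory.variance_fun_id_gaussianReal (μ := 0) (v := v),
      ProbabilityTheory.variance_of_integral_eq_zero aemeasurable_id'
        ProbabilityTheory.integral_id_gaussianReal]
  rw [ProbabilityTheory.integral_gaussianReal_eq_integral_smul hv0] at hvar
  have hpdf (x : ℝ) : ProbabilityTheory.gaussianPDFReal 0 v x • x ^ 2 =
      (√(π / b))⁻¹ * (x ^ 2 * exp (-b * x ^ 2)) := by
    rw [ProbabilityTheory.gaussianPDFReal, hv, smul_eq_mul]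
    field_simp
    ring_nf
  simp only [hpdf] at hvar
  rw [integral_const_mul, inv_mul_eq_iff_eq_mul₀ (by positivity), hv] at hvar
  rw [hvar, ← div_eq_mul_inv]

theorem integrable_inv_one_add_sq_mul {b : ℝ} (hb : 0 < b) :
    Integrable fun u : ℝ => (1 + u ^ 2 * b)⁻¹ := by
  simpa only [mul_pow, sq_sqrt hb.le] using
    integrable_inv_one_add_sq.comp_mul_right' (sqrt_pos.2 hb).ne'

theorem integral_inv_one_add_sq_mul {b : ℝ} (hb : 0 < b) :
    ∫ u : ℝ, (1 + u ^ 2 * b)⁻¹ = π / √b := by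
  have h := Measure.integral_comp_mul_right (fun u : ℝ => (1 + u ^ 2)⁻¹) (√b)
  simp only [mul_pow, sq_sqrt hb.le, integral_univ_inv_one_add_sq, smul_eq_mul] at h
  rw [h, abs_of_nonneg (by positivity), inv_mul_eq_div]

section Laplace

variable {α : Type*} [MeasurableSpace α] {μ : Measure α} {ψ w : α → ℝ} {lam : ℝ}

theorem integrable_prod_exp_mul_exp_mul [SFinite μ] (hlam : 0 < lam) (hψ : AEMeasurable ψ μ)
    (hψ_nonpos : ∀ᵐ x ∂μ, ψ x ≤ 0) (hw : Integrable w μ) :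
    Integrable (Function.uncurry fun (t : ℝ) (x : α) => exp (-lam * t) * (exp (ψ x * t) * w x))
      ((volume.restrict (Set.Ioi 0)).prod μ) := by
  refine (Integrable.mul_prod (integrableOn_exp_mul_Ioi (neg_neg_of_pos hlam) 0) hw).mono ?_ ?_
  · have hψ' := hψ.comp_snd (μ := volume.restrict (Set.Ioi (0 : ℝ)))
    have hw' := hw.aemeasurable.comp_snd (μ := volume.restrict (Set.Ioi (0 : ℝ)))
    exact (AEMeasurable.mul (by fun_prop)
      ((measurable_exp.comp_aemeasurable (hψ'.mul (by fun_prop))).mul hw')).aestronglyMeasurable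
  · filter_upwards [Measure.quasiMeasurePreserving_fst.ae (ae_restrict_mem measurableSet_Ioi),
      Measure.quasiMeasurePreserving_snd.ae hψ_nonpos] with p ht hψp
    simp only [Function.uncurry_def, norm_mul]
    gcongr
    refine mul_le_of_le_one_left (norm_nonneg _) ?_
    rw [norm_eq_abs, abs_exp, exp_le_one_iff]
    exact mul_nonpos_of_nonpos_of_nonneg hψp (le_of_lt ht)

theorem integral_Ioi_exp_neg_mul_mul_exp_mul {m : ℝ} (hm : m < lam) (c : ℝ) :
    ∫ t in Set.Ioi (0 : ℝ), exp (-lam * t) * (exp (m * t) * c) = c / (lam - m) := by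
  calc ∫ t in Set.Ioi (0 : ℝ), exp (-lam * t) * (exp (m * t) * c)
      = ∫ t in Set.Ioi (0 : ℝ), exp ((m - lam) * t) * c := by
        congr 1 with t
        rw [← mul_assoc, ← exp_add]
        ring_nf
    _ = c / (lam - m) := by
        rw [integral_mul_const, integral_exp_mul_Ioi (sub_neg.2 hm), mul_zero, exp_zero, neg_div,
          ← div_neg, neg_sub, one_div_mul_eq_div]

theorem integral_exp_mul_integral_exp_mul [SFinite μ] (hlam : 0 < lam) (hψ : AEMeasurable ψ μ)
    (hψ_nonpos : ∀ᵐ x ∂μ, ψ x ≤ 0) (hw : Integrable w μ) :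
    ∫ t in Set.Ioi (0 : ℝ), exp (-lam * t) * ∫ x, exp (ψ x * t) * w x ∂μ =
      ∫ x, w x / (lam - ψ x) ∂μ := by
  simp only [← integral_const_mul]
  rw [integral_integral_swap (integrable_prod_exp_mul_exp_mul hlam hψ hψ_nonpos hw)]
  exact integral_congr_ae (hψ_nonpos.mono fun x hx =>
    integral_Ioi_exp_neg_mul_mul_exp_mul (hx.trans_lt hlam) (w x))

end Laplace

section Concentration

/-- The kernel `λ / (λ + θ² g(θ))`, equal to `1` at `θ = 0` and concentrating there as `λ → 0+`.
The function `g` plays the role of `-φ(θ) / θ²`, which makes the denominator `λ - φ(θ)`. -/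
noncomputable def resolventKernel (g : ℝ → ℝ) (lam θ : ℝ) : ℝ := lam / (lam + θ ^ 2 * g θ)

variable {E : Type*} [NormedAddCommGroup E] [NormedSpace ℝ E] {S : Set ℝ} {f : ℝ → E} {g : ℝ → ℝ}

theorem resolventKernel_sqrt_mul (g : ℝ → ℝ) {lam : ℝ} (hlam : 0 < lam) (u : ℝ) :
    resolventKernel g lam (√lam * u) = (1 + u ^ 2 * g (√lam * u))⁻¹ := by
  calc resolventKernel g lam (√lam * u)
      = lam * 1 / (lam * (1 + u ^ 2 * g (√lam * u))) := by
        rw [resolventKernel, mul_pow, sq_sqrt hlam.le]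
        ring_nf
    _ = (1 + u ^ 2 * g (√lam * u))⁻¹ := by rw [mul_div_mul_left _ _ hlam.ne', one_div]

theorem quasiMeasurePreserving_mul_left {c : ℝ} (hc : c ≠ 0) :
    Measure.QuasiMeasurePreserving fun x : ℝ => c * x := by
  refine ⟨by fun_prop, ?_⟩
  rw [map_volume_mul_left hc]
  exact Measure.smul_absolutelyContinuous

theorem inv_smul_setIntegral_eq_integral_indicator_mul (hS : MeasurableSet S) {c : ℝ}
    (hc : 0 ≤ c) (f : ℝ → E) : c⁻¹ • ∫ θ in S, f θ = ∫ u, S.indicator f (c * u) := by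
  rw [Measure.integral_comp_mul_left, integral_indicator hS, abs_of_nonneg (inv_nonneg.2 hc)]

theorem aestronglyMeasurable_indicator_resolventKernel_smul (hS : MeasurableSet S)
    (hf : AEStronglyMeasurable f (volume.restrict S))
    (hg : AEMeasurable g (volume.restrict S)) (lam : ℝ) :
    AEStronglyMeasurable (S.indicator fun θ => resolventKernel g lam θ • f θ) := by
  refine (aestronglyMeasurable_indicator_iff hS).2 (AEStronglyMeasurable.smul ?_ hf)
  unfold resolventKernel
  exact AEMeasurable.aestronglyMeasurable (by fun_prop)

theorem norm_indicator_resolventKernel_smul_sqrt_mul_le {M c lam : ℝ} (hM : 0 ≤ M) (hc : 0 < c)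
    (hfM : ∀ θ ∈ S, ‖f θ‖ ≤ M) (hgc : ∀ θ ∈ S, c ≤ g θ) (hlam : 0 < lam) (u : ℝ) :
    ‖S.indicator (fun θ => resolventKernel g lam θ • f θ) (√lam * u)‖ ≤
      (1 + u ^ 2 * c)⁻¹ * M := by
  by_cases hu : √lam * u ∈ S
  · have hgu := hgc _ hu
    have hg0 : 0 < g (√lam * u) := hc.trans_le hgu
    rw [Set.indicator_of_mem hu, resolventKernel_sqrt_mul g hlam, norm_smul,
      norm_of_nonneg (by positivity)]
    gcongr
    exact hfM _ hu
  · rw [Set.indicator_of_notMem hu, norm_zero]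
    positivity

theorem tendsto_indicator_resolventKernel_smul_sqrt_mul (hS : S ∈ 𝓝 0) (hf : ContinuousAt f 0)
    (hg : ContinuousAt g 0) (hg0 : 0 < g 0) (u : ℝ) :
    Tendsto (fun lam => S.indicator (fun θ => resolventKernel g lam θ • f θ) (√lam * u)) (𝓝[>] 0)
      (𝓝 ((1 + u ^ 2 * g 0)⁻¹ • f 0)) := by
  have hscale : Tendsto (fun lam : ℝ => √lam * u) (𝓝[>] 0) (𝓝 0) := by
    refine Tendsto.mono_left ?_ nhdsWithin_le_nhds
    simpa using (continuous_sqrt.mul_const u).tendsto 0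
  have hne : 1 + u ^ 2 * g 0 ≠ 0 := by positivity
  have hlim := ((((hg.tendsto.comp hscale).const_mul (u ^ 2)).const_add 1).inv₀ hne).smul
    (hf.tendsto.comp hscale)
  refine hlim.congr' ?_
  filter_upwards [self_mem_nhdsWithin, hscale.eventually_mem hS] with lam hlam hu
  rw [Set.indicator_of_mem hu, resolventKernel_sqrt_mul g hlam, Function.comp_apply,
    Function.comp_apply]

theorem tendsto_inv_sqrt_smul_setIntegral_resolventKernel_smul [CompleteSpace E] {M c : ℝ}
    (hS : MeasurableSet S) (hS0 : S ∈ 𝓝 0) (hfm : AEStronglyMeasurable f (volume.restrict S))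
    (hgm : AEMeasurable g (volume.restrict S)) (hf : ContinuousAt f 0) (hg : ContinuousAt g 0)
    (hfM : ∀ θ ∈ S, ‖f θ‖ ≤ M) (hc : 0 < c) (hgc : ∀ θ ∈ S, c ≤ g θ) :
    Tendsto (fun lam => (√lam)⁻¹ • ∫ θ in S, resolventKernel g lam θ • f θ)
      (𝓝[>] 0) (𝓝 ((π / √(g 0)) • f 0)) := by
  have hg0 : 0 < g 0 := hc.trans_le (hgc 0 (mem_of_mem_nhds hS0))
  have hM : 0 ≤ M := (norm_nonneg _).trans (hfM 0 (mem_of_mem_nhds hS0))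
  simp only [inv_smul_setIntegral_eq_integral_indicator_mul hS (sqrt_nonneg _)]
  rw [← integral_inv_one_add_sq_mul hg0, ← integral_smul_const]
  refine tendsto_integral_filter_of_dominated_convergence (fun u => (1 + u ^ 2 * c)⁻¹ * M)
    ?measurable ?bound ((integrable_inv_one_add_sq_mul hc).mul_const M) ?limit
  case measurable =>
    filter_upwards [self_mem_nhdsWithin] with lam hlam
    exact (aestronglyMeasurable_indicator_resolventKernel_smul hS hfm hgm lam)
      |>.comp_quasiMeasurePreserving (quasiMeasurePreserving_mul_left (sqrt_pos.2 hlam).ne')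
  case bound =>
    filter_upwards [self_mem_nhdsWithin] with lam hlam
    exact .of_forall (norm_indicator_resolventKernel_smul_sqrt_mul_le hM hc hfM hgc hlam)
  case limit =>
    exact .of_forall (tendsto_indicator_resolventKernel_smul_sqrt_mul hS0 hf hg hg0)

end Concentration

section OneSubCosQuot

/-- The quotient `(1 - cos (cθ)) / θ²`, extended continuously to `θ = 0`. Writing it with `sinc`
makes the continuity at the origin automatic. -/
noncomputable def oneSubCosQuot (c θ : ℝ) : ℝ := c ^ 2 / 2 * sinc (c * θ / 2) ^ 2

theorem sq_mul_oneSubCosQuot (c θ : ℝ) : θ ^ 2 * oneSubCosQuot c θ = 1 - cos (c * θ) := by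
  calc θ ^ 2 * oneSubCosQuot c θ = 2 * (c * θ / 2 * sinc (c * θ / 2)) ^ 2 := by
        rw [oneSubCosQuot]
        ring
    _ = 1 - cos (2 * (c * θ / 2)) := by
        rw [mul_sinc, cos_two_mul_eq_one_sub, sub_sub_cancel]
    _ = 1 - cos (c * θ) := by rw [mul_div_cancel₀ _ two_ne_zero]

theorem oneSubCosQuot_zero_left (θ : ℝ) : oneSubCosQuot 0 θ = 0 := by simp [oneSubCosQuot]

theorem oneSubCosQuot_zero_right (c : ℝ) : oneSubCosQuot c 0 = c ^ 2 / 2 := by simp [oneSubCosQuot]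

theorem oneSubCosQuot_nonneg (c θ : ℝ) : 0 ≤ oneSubCosQuot c θ := by
  unfold oneSubCosQuot
  positivity

theorem oneSubCosQuot_le (c θ : ℝ) : oneSubCosQuot c θ ≤ c ^ 2 / 2 :=
  mul_le_of_le_one_right (by positivity) ((sq_le_one_iff_abs_le_one _).2 (abs_sinc_le_one _))

theorem continuous_oneSubCosQuot (c : ℝ) : Continuous (oneSubCosQuot c) := by
  unfold oneSubCosQuot
  fun_prop

theorem eq_zero_of_closure_eq_top_of_cos_eq_one {s : Set ℤ} (hs : AddSubgroup.closure s = ⊤)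
    {θ : ℝ} (hθ : θ ∈ Set.Ioo (-(2 * π)) (2 * π)) (hcos : ∀ z ∈ s, cos (z * θ) = 1) : θ = 0 := by
  have hker : AddSubgroup.closure s ≤ (zmultiplesHom Angle (θ : Angle)).ker := by
    refine (AddSubgroup.closure_le _).2 fun z hz => ?_
    obtain ⟨n, hn⟩ := (cos_eq_one_iff _).1 (hcos z hz)
    have h : ((z * θ : ℝ) : Angle) = 0 := Angle.coe_eq_zero_iff.2 ⟨n, by simpa using hn⟩
    simpa using h
  have hone : (1 : ℤ) • (θ : Angle) = 0 := hker (hs ▸ AddSubgroup.mem_top 1)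
  refine (cos_eq_one_iff_of_lt_of_lt hθ.1 hθ.2).1 ?_
  rw [← Angle.cos_coe, ← one_zsmul (θ : Angle), hone, Angle.cos_zero]

theorem exists_oneSubCosQuot_pos_of_closure_eq_top {s : Set ℤ} (hs : AddSubgroup.closure s = ⊤)
    {θ : ℝ} (hθ : θ ∈ Set.Ioo (-(2 * π)) (2 * π)) : ∃ z ∈ s, 0 < oneSubCosQuot z θ := by
  by_contra! hnonpos
  have hzero (z : ℤ) (hz : z ∈ s) : oneSubCosQuot z θ = 0 :=
    (hnonpos z hz).antisymm (oneSubCosQuot_nonneg z θ)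
  have hθ0 : θ = 0 := by
    refine eq_zero_of_closure_eq_top_of_cos_eq_one hs hθ fun z hz => ?_
    rw [eq_comm, ← sub_eq_zero, ← sq_mul_oneSubCosQuot, hzero z hz, mul_zero]
  have hsub : s ⊆ {0} := fun z hz => by
    simpa [hθ0, oneSubCosQuot_zero_right] using hzero z hz
  exact top_ne_bot (hs.symm.trans (AddSubgroup.closure_eq_bot_iff.2 hsub))

end OneSubCosQuot

section Symbol

variable {a : ℤ → ℝ}

/-- The quotient `-φ(θ) / θ²`, extended continuously to `θ = 0`. -/
noncomputable def phi1Quot (a : ℤ → ℝ) (θ : ℝ) : ℝ := ∑' z : ℤ, a z * oneSubCosQuot z θ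

theorem phi1Quot_zero (a : ℤ → ℝ) : phi1Quot a 0 = -phi1'' a / 2 := by
  simp only [phi1Quot, phi1'', oneSubCosQuot_zero_right, neg_neg, ← tsum_div_const, mul_div_assoc]

theorem norm_mul_oneSubCosQuot_le (a : ℤ → ℝ) (z : ℤ) (θ : ℝ) :
    ‖a z * oneSubCosQuot z θ‖ ≤ ‖(z : ℝ) ^ 2 * a z‖ := by
  rw [norm_mul, norm_mul, mul_comm]
  gcongr
  rw [norm_of_nonneg (oneSubCosQuot_nonneg _ _), norm_of_nonneg (sq_nonneg _)]
  linarith [oneSubCosQuot_le z θ, sq_nonneg (z : ℝ)]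

theorem continuous_phi1Quot (hvar : Summable fun z : ℤ => (z : ℝ) ^ 2 * a z) :
    Continuous (phi1Quot a) :=
  continuous_tsum (fun z => (continuous_oneSubCosQuot z).const_mul (a z)) hvar.norm
    (norm_mul_oneSubCosQuot_le a)

theorem phi1_eq_neg_sq_mul_phi1Quot (hsum : HasSum a 0) (θ : ℝ) :
    phi1 a θ = -(θ ^ 2 * phi1Quot a θ) := by
  have hcos : Summable fun z : ℤ => a z * cos (z * θ) :=
    hsum.summable.norm.of_norm_bounded fun z => by
      rw [norm_mul]
      exact mul_le_of_le_one_right (norm_nonneg _) (abs_cos_le_one _)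
  calc phi1 a θ = -∑' z : ℤ, (a z - a z * cos (z * θ)) := by
        rw [hsum.summable.tsum_sub hcos, hsum.tsum_eq, zero_sub, neg_neg, phi1]
    _ = -(θ ^ 2 * phi1Quot a θ) := by
        rw [phi1Quot, ← tsum_mul_left]
        congr! 3 with z
        rw [mul_left_comm, sq_mul_oneSubCosQuot, mul_one_sub]

theorem continuous_phi1 (hsum : HasSum a 0) (hvar : Summable fun z : ℤ => (z : ℝ) ^ 2 * a z) :
    Continuous (phi1 a) := by
  have := continuous_phi1Quot hvar
  simp only [funext (phi1_eq_neg_sq_mul_phi1Quot hsum)]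
  fun_prop

theorem mul_oneSubCosQuot_nonneg (hpos : ∀ z : ℤ, z ≠ 0 → 0 ≤ a z) (z : ℤ) (θ : ℝ) :
    0 ≤ a z * oneSubCosQuot z θ := by
  rcases eq_or_ne z 0 with rfl | hz
  · simp [oneSubCosQuot_zero_left]
  · exact mul_nonneg (hpos z hz) (oneSubCosQuot_nonneg _ _)

theorem phi1_nonpos (hpos : ∀ z : ℤ, z ≠ 0 → 0 ≤ a z) (hsum : HasSum a 0) (θ : ℝ) :
    phi1 a θ ≤ 0 := by
  rw [phi1_eq_neg_sq_mul_phi1Quot hsum, neg_nonpos]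
  exact mul_nonneg (sq_nonneg θ) (tsum_nonneg fun z => mul_oneSubCosQuot_nonneg hpos z θ)

theorem phi1Quot_pos (hpos : ∀ z : ℤ, z ≠ 0 → 0 ≤ a z)
    (hvar : Summable fun z : ℤ => (z : ℝ) ^ 2 * a z)
    (hirr : AddSubgroup.closure {z : ℤ | 0 < a z} = ⊤) {θ : ℝ}
    (hθ : θ ∈ Set.Ioo (-(2 * π)) (2 * π)) : 0 < phi1Quot a θ := by
  obtain ⟨z, haz, hz⟩ := exists_oneSubCosQuot_pos_of_closure_eq_top hirr hθ
  exact (hvar.norm.of_norm_bounded (norm_mul_oneSubCosQuot_le a · θ)).tsum_pos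
    (mul_oneSubCosQuot_nonneg hpos · θ) z (mul_pos haz hz)

end Symbol

section Expansion

variable {a : ℤ → ℝ}

theorem G1_eq_integral_div {lam : ℝ} (hlam : 0 < lam) (hcont : Continuous (phi1 a))
    (hnonpos : ∀ θ, phi1 a θ ≤ 0) (x y : ℤ) :
    G1 a lam x y = (2 * π)⁻¹ * ∫ θ in (-π)..π, cos (θ * ((y : ℝ) - x)) / (lam - phi1 a θ) := by
  have hcos : IntegrableOn (fun θ : ℝ => cos (θ * ((y : ℝ) - x))) (Set.Ioc (-π) π) :=
    (by fun_prop : Continuous _).integrableOn_Ioc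
  simp only [G1, p1, intervalIntegral.integral_of_le (neg_le_self pi_nonneg), mul_left_comm,
    integral_const_mul]
  rw [integral_exp_mul_integral_exp_mul hlam hcont.aemeasurable (.of_forall hnonpos) hcos]

theorem rho1_div_neg (ha : a 0 ≠ 0) (hsum : HasSum a 0) {r : ℤ} (hr : r ≠ 0) :
    rho1 a r / -a 0 = (2 * π)⁻¹ * ∫ θ in (-π)..π, oneSubCosQuot r θ / phi1Quot a θ := by
  have hquot : ∫ θ in (-π)..π, (cos (r * θ) - 1) / phi1 a θ =
      ∫ θ in (-π)..π, oneSubCosQuot r θ / phi1Quot a θ := by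
    refine intervalIntegral.integral_congr_ae ?_
    filter_upwards [Measure.ae_ne volume (0 : ℝ)] with θ hθ _
    rw [← neg_sub, ← sq_mul_oneSubCosQuot, phi1_eq_neg_sq_mul_phi1Quot hsum, neg_div_neg_eq,
      mul_div_mul_left _ _ (pow_ne_zero 2 hθ)]
  rw [rho1, if_neg hr, hquot]
  field_simp

theorem two_mul_sqrt_pi_mul_gamTilde1 (h0 : 0 < phi1Quot a 0) (r : ℤ) :
    2 * √π * gamTilde1 a r =
      (2 * π)⁻¹ * (π / √(phi1Quot a 0) * (oneSubCosQuot r 0 / phi1Quot a 0)) := by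
  have hexponent (v : ℝ) : phi1'' a * v ^ 2 / 2 = -phi1Quot a 0 * v ^ 2 := by
    rw [phi1Quot_zero]
    ring
  simp only [gamTilde1, hexponent, integral_sq_mul_exp_neg_mul_sq h0, oneSubCosQuot_zero_right,
    sqrt_div pi_nonneg]
  have := sqrt_pos.2 h0
  field_simp
  rw [sq_sqrt pi_nonneg]
  ring

theorem G1_zero_sub_G1 {lam : ℝ} (hlam : 0 < lam) (hpos : ∀ z : ℤ, z ≠ 0 → 0 ≤ a z)
    (hsum : HasSum a 0) (hvar : Summable fun z : ℤ => (z : ℝ) ^ 2 * a z) (r : ℤ) :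
    G1 a lam 0 0 - G1 a lam 0 r =
      (2 * π)⁻¹ * ∫ θ in (-π)..π, θ ^ 2 * oneSubCosQuot r θ / (lam + θ ^ 2 * phi1Quot a θ) := by
  have hcont := continuous_phi1 hsum hvar
  have hnonpos := phi1_nonpos hpos hsum
  have hint (y : ℤ) : IntervalIntegrable
      (fun θ : ℝ => cos (θ * ((y : ℝ) - (0 : ℤ))) / (lam - phi1 a θ)) volume (-π) π :=
    (Continuous.div (by fun_prop) (by fun_prop) fun θ =>
      (sub_pos.2 ((hnonpos θ).trans_lt hlam)).ne').intervalIntegrable _ _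
  rw [G1_eq_integral_div hlam hcont hnonpos, G1_eq_integral_div hlam hcont hnonpos, ← mul_sub,
    ← intervalIntegral.integral_sub (hint 0) (hint r)]
  congr! 3 with θ
  rw [sub_self, mul_zero, cos_zero, Int.cast_zero, sub_zero, mul_comm θ r, ← sub_div,
    ← sq_mul_oneSubCosQuot, phi1_eq_neg_sq_mul_phi1Quot hsum, sub_neg_eq_add]

theorem sq_mul_div_add_sq_mul_sub_div {g : ℝ → ℝ} {lam θ : ℝ} (hlam : 0 < lam) (hg : 0 < g θ)
    (A : ℝ) :
    θ ^ 2 * A / (lam + θ ^ 2 * g θ) - A / g θ = -(resolventKernel g lam θ * (A / g θ)) := by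
  have : lam + θ ^ 2 * g θ ≠ 0 := by positivity
  rw [resolventKernel]
  field_simp
  ring

theorem continuousOn_oneSubCosQuot_div_phi1Quot
    (hvar : Summable fun z : ℤ => (z : ℝ) ^ 2 * a z) {s : Set ℝ}
    (hne : ∀ θ ∈ s, phi1Quot a θ ≠ 0) (c : ℝ) :
    ContinuousOn (fun θ => oneSubCosQuot c θ / phi1Quot a θ) s :=
  (continuous_oneSubCosQuot c).continuousOn.div (continuous_phi1Quot hvar).continuousOn hne

theorem G1_zero_sub_G1_sub_rho1_div {lam : ℝ} (hlam : 0 < lam)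
    (hpos : ∀ z : ℤ, z ≠ 0 → 0 ≤ a z) (ha : a 0 ≠ 0) (hsum : HasSum a 0)
    (hvar : Summable fun z : ℤ => (z : ℝ) ^ 2 * a z)
    (hquot : ∀ θ ∈ Set.Icc (-π) π, 0 < phi1Quot a θ) {r : ℤ} (hr : r ≠ 0) :
    G1 a lam 0 0 - G1 a lam 0 r - rho1 a r / -a 0 =
      -((2 * π)⁻¹ * ∫ θ in (-π)..π,
        resolventKernel (phi1Quot a) lam θ * (oneSubCosQuot r θ / phi1Quot a θ)) := by
  rw [← Set.uIcc_of_le (neg_le_self pi_nonneg)] at hquot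
  have hG1 : ContinuousOn (fun θ => θ ^ 2 * oneSubCosQuot r θ / (lam + θ ^ 2 * phi1Quot a θ))
      (Set.uIcc (-π) π) := by
    have hA := continuous_oneSubCosQuot r
    have hq := continuous_phi1Quot hvar
    refine ContinuousOn.div (by fun_prop) (by fun_prop) fun θ hθ => ?_
    have := hquot θ hθ
    positivity
  have hrho1 := continuousOn_oneSubCosQuot_div_phi1Quot hvar (fun θ hθ => (hquot θ hθ).ne') r
  rw [G1_zero_sub_G1 hlam hpos hsum hvar, rho1_div_neg ha hsum hr, ← mul_sub,
    ← intervalIntegral.integral_sub hG1.intervalIntegrable hrho1.intervalIntegrable, ← mul_neg,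
    ← intervalIntegral.integral_neg]
  congr 1
  exact intervalIntegral.integral_congr fun θ hθ =>
    sq_mul_div_add_sq_mul_sub_div hlam (hquot θ hθ) _

theorem tendsto_inv_sqrt_mul_integral_resolventKernel_phi1Quot
    (hvar : Summable fun z : ℤ => (z : ℝ) ^ 2 * a z)
    (hquot : ∀ θ ∈ Set.Icc (-π) π, 0 < phi1Quot a θ) (c : ℝ) :
    Tendsto (fun lam => (√lam)⁻¹ * ∫ θ in (-π)..π,
        resolventKernel (phi1Quot a) lam θ * (oneSubCosQuot c θ / phi1Quot a θ)) (𝓝[>] 0)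
      (𝓝 (π / √(phi1Quot a 0) * (oneSubCosQuot c 0 / phi1Quot a 0))) := by
  have hq := continuous_phi1Quot hvar
  have hk := continuousOn_oneSubCosQuot_div_phi1Quot hvar (fun θ hθ => (hquot θ hθ).ne') c
  have hmem : Set.Icc (-π) π ∈ 𝓝 0 := Icc_mem_nhds (neg_neg_of_pos pi_pos) pi_pos
  obtain ⟨M, hM⟩ := isCompact_Icc.exists_bound_of_continuousOn hk
  obtain ⟨θ₀, hθ₀, hmin⟩ := isCompact_Icc.exists_isMinOn ⟨0, mem_of_mem_nhds hmem⟩ hq.continuousOn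
  simpa only [intervalIntegral.integral_of_le (neg_le_self pi_nonneg), integral_Icc_eq_integral_Ioc,
    smul_eq_mul] using
    tendsto_inv_sqrt_smul_setIntegral_resolventKernel_smul measurableSet_Icc hmem
      (hk.aestronglyMeasurable measurableSet_Icc) hq.aemeasurable (hk.continuousAt hmem)
      hq.continuousAt hM (hquot θ₀ hθ₀) hmin

theorem tendsto_G1_zero_sub_G1_sub_rho1_div_div_sqrt
    (hpos : ∀ z : ℤ, z ≠ 0 → 0 ≤ a z) (ha : a 0 ≠ 0) (hsum : HasSum a 0)
    (hvar : Summable fun z : ℤ => (z : ℝ) ^ 2 * a z)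
    (hquot : ∀ θ ∈ Set.Icc (-π) π, 0 < phi1Quot a θ) {r : ℤ} (hr : r ≠ 0) :
    Tendsto (fun lam => (G1 a lam 0 0 - G1 a lam 0 r - rho1 a r / -a 0) / √lam) (𝓝[>] 0)
      (𝓝 (-(2 * √π * gamTilde1 a r))) := by
  rw [two_mul_sqrt_pi_mul_gamTilde1 (hquot 0 ⟨neg_nonpos.2 pi_nonneg, pi_nonneg⟩)]
  have hlim := ((tendsto_inv_sqrt_mul_integral_resolventKernel_phi1Quot hvar hquot r).const_mul
    (2 * π)⁻¹).neg
  refine hlim.congr' (eventually_mem_nhdsWithin.mono fun lam hlam => ?_)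
  simp only [G1_zero_sub_G1_sub_rho1_div hlam hpos ha hsum hvar hquot hr]
  ring

end Expansion

theorem Glam_diff_expansion_d1_general
    (a : ℤ → ℝ)
    (hpos : ∀ z : ℤ, z ≠ 0 → 0 ≤ a z)
    (hneg : a 0 < 0)
    (hsum : HasSum a 0)
    (hvar : Summable fun z : ℤ => (z : ℝ) ^ 2 * a z)
    (hirr : AddSubgroup.closure {z : ℤ | 0 < a z} = ⊤)
    (r : ℤ) (hr : r ≠ 0) :
    (fun lam : ℝ => G1 a lam 0 0 - G1 a lam 0 r -
        (rho1 a r / (-(a 0)) - 2 * Real.sqrt π * gamTilde1 a r * Real.sqrt lam))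
      =o[𝓝[>] (0 : ℝ)] fun lam : ℝ => Real.sqrt lam := by
  have hquot (θ : ℝ) (hθ : θ ∈ Set.Icc (-π) π) : 0 < phi1Quot a θ :=
    phi1Quot_pos hpos hvar hirr ⟨by linarith [hθ.1, pi_pos], by linarith [hθ.2, pi_pos]⟩
  have hlim := tendsto_G1_zero_sub_G1_sub_rho1_div_div_sqrt hpos hneg.ne hsum hvar hquot hr
  have hsqrt : ∀ᶠ lam : ℝ in 𝓝[>] 0, √lam ≠ 0 :=
    eventually_mem_nhdsWithin.mono fun lam hlam => (sqrt_pos.2 hlam).ne'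
  refine (isLittleO_sub_const_mul_of_tendsto_div hsqrt hlim).congr_left fun lam => ?_
  ring

/-- For `d = 1` and `r ≠ 0`:
`G_λ(0,0) - G_λ(0,r) = ρ₁(r)/a - 2√π γ̃₁(r) √λ + o(√λ)` as `λ → 0+`. -/
theorem Glam_diff_expansion_d1
    (a : ℤ → ℝ)
    (hpos : ∀ z : ℤ, z ≠ 0 → 0 ≤ a z)
    (hneg : a 0 < 0)
    (hsymm : ∀ z : ℤ, a (-z) = a z)
    (hsum : HasSum a 0)
    (hvar : Summable fun z : ℤ => (z : ℝ) ^ 2 * a z)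
    (hirr : AddSubgroup.closure {z : ℤ | 0 < a z} = ⊤)
    (r : ℤ) (hr : r ≠ 0) :
    (fun lam : ℝ => G1 a lam 0 0 - G1 a lam 0 r -
        (rho1 a r / (-(a 0)) - 2 * Real.sqrt π * gamTilde1 a r * Real.sqrt lam))
      =o[𝓝[>] (0 : ℝ)] fun lam : ℝ => Real.sqrt lam :=
  Glam_diff_expansion_d1_general a hpos hneg hsum hvar hirr r hr
end
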